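/- Σ_{l,m,n ≥ 1} (−1)^{l+n} / (l² m³ n³ (l+m)³ (m+n)³ (l+m+n)³) = (17π⁸/344064)·ζ(9) + (22847π⁶/1720320)·ζ(11) + (49005π⁴/16384)·ζ(13) + (3768307π²/98304)·ζ(15) − (11189819/16384)·ζ(17). -/

import Mathlib

open Complex Real

/-! The six linear forms of the series are the pairwise differences of four integers `0`, `N`, `q`,
`r`. Sum `(-1) ^ (N + q + r) / (N³ q³ (N - q)³ r³ (N - r)³ (q - r)²)` over `N > 0` and all `q`, `r`,
and sort the terms by the order of the four points, with gaps `l`, `m`, `n` between neighbours. If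
`P` is the product of the six differences, every term is `(-1) ^ (l + n) / P³` times the
difference `q - r`, up to sign; over the twelve orders these signed differences add up to
`2 (l + n)`, and so the lattice sum is four times the required one.

For fixed `N` the sums over `r` and then over `q` are evaluated by partial fractions, which reduce
them to the series `∑ ε ^ q / q ^ k` over nonzero integers with `ε = ±1`. These vanish for odd `k`
and are rational multiples of `π ^ k` for even `k`. What remains is a polynomial in `π²`, `N⁻¹` and
`(-1) ^ N`, whose sum over `N` is a combination of zeta values at odd integers. -/

open Filter Topology
open Finset.HasAntidiagonal (antidiagonal)

section SquareRootsOfOne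

variable {G₀ : Type*} [GroupWithZero G₀] {ε : G₀} (hε : ε ^ 2 = 1)
include hε

lemma ne_zero_of_sq_eq_one : ε ≠ 0 :=
  (pow_ne_zero_iff two_ne_zero).mp (hε ▸ one_ne_zero)

lemma zpow_neg_of_sq_eq_one (q : ℤ) : ε ^ (-q) = ε ^ q := by
  rw [← inv_zpow', inv_eq_of_mul_eq_one_left (by rw [← sq, hε])]

lemma zpow_sub_of_sq_eq_one (m q : ℤ) : ε ^ (m - q) = ε ^ m * ε ^ q := by
  rw [zpow_sub₀ (ne_zero_of_sq_eq_one hε), div_eq_mul_inv, ← zpow_neg, zpow_neg_of_sq_eq_one hε]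

lemma zpow_mul_self_of_sq_eq_one (q : ℤ) : ε ^ q * ε ^ q = 1 := by
  rw [← zpow_sub_of_sq_eq_one hε, sub_self, zpow_zero]

end SquareRootsOfOne

lemma norm_zpow_of_sq_eq_one {ε : ℂ} (hε : ε ^ 2 = 1) (q : ℤ) : ‖ε ^ q‖ = 1 := by
  rw [norm_zpow, Complex.norm_eq_one_of_pow_eq_one hε two_ne_zero, one_zpow]

lemma summable_inv_intCast_pow {k : ℕ} (hk : 2 ≤ k) :
    Summable fun q : ℤ => ((q : ℂ) ^ k)⁻¹ := by
  refine Summable.of_norm ?_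
  simpa using! (summable_one_div_int_pow.mpr hk).norm

section PrincipalValue

lemma sum_Ico_neg_of_odd {a : ℤ → ℂ} (ha : ∀ q, a (-q) = -a q) (n : ℕ) :
    ∑ q ∈ Finset.Ico (-n : ℤ) n, a q = a (-n) := by
  induction n with
  | zero => simpa [eq_comm, CharZero.eq_neg_self_iff] using ha 0
  | succ n ih =>
    rw [Nat.cast_succ, Finset.Ico_succ_succ, Finset.sum_union (by simp), ih,
      Finset.sum_pair (by lia), ha n]
    ring

lemma tendsto_sum_Ico_sub_of_odd {a : ℤ → ℂ} (ha : ∀ q, a (-q) = -a q)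
    (h0 : Tendsto a cofinite (𝓝 0)) (c : ℤ) :
    Tendsto (fun n : ℕ => ∑ q ∈ Finset.Ico (-n : ℤ) n, a (q - c)) atTop (𝓝 0) := by
  have hbot (d : ℤ) : Tendsto (fun n : ℕ => a (-n - d)) atTop (𝓝 0) := by
    refine h0.comp (Function.Injective.tendsto_cofinite (fun m n h => ?_) |>.mono_left
      Nat.cofinite_eq_atTop.ge)
    simpa using h
  have htop (d : ℤ) : Tendsto (fun n : ℕ => a (n - d)) atTop (𝓝 0) := by
    simpa [← ha, ← neg_add', neg_add_eq_sub] using (hbot (-d)).neg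
  have hdiff (d : ℤ) : Tendsto (fun n : ℕ => ∑ q ∈ Finset.Ico (-n : ℤ) n, a (q - d)
      - ∑ q ∈ Finset.Ico (-n : ℤ) n, a (q - (d - 1))) atTop (𝓝 0) := by
    convert (hbot d).sub (htop d) using 2 with n
    · rw [← Finset.sum_sub_distrib, ← Finset.sum_Ico_int_sub n fun q => a (q - d)]
      exact Finset.sum_congr rfl fun q _ => by congr 2; ring
    · rw [sub_zero]
  induction c using Int.induction_on with
  | zero => simpa only [sub_zero, sum_Ico_neg_of_odd ha] using hbot 0
  | succ c ih => simpa using (hdiff (c + 1)).add ih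
  | pred c ih => simpa using ih.sub (hdiff (-c))

variable {ε : ℂ} (hε : ε ^ 2 = 1)
include hε

lemma summable_zpow_mul_inv_add_inv_sub (c : ℤ) :
    Summable fun q : ℤ => ε ^ q * ((q : ℂ)⁻¹ + ((c : ℂ) - q)⁻¹) := by
  have hsq : Summable fun q : ℤ => ‖((q : ℂ) ^ 2)⁻¹‖ := (summable_inv_intCast_pow le_rfl).norm
  have hsq' : Summable fun q : ℤ => ‖(((c : ℂ) - q) ^ 2)⁻¹‖ := by
    simpa only [Function.comp_def, Equiv.subLeft_apply, Int.cast_sub]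
      using (Equiv.subLeft c).summable_iff.mpr hsq
  refine ((hsq.add hsq').mul_left ‖(c : ℂ)‖).of_norm_bounded_eventually ?_
  filter_upwards [(Set.toFinite {0, c}).compl_mem_cofinite] with q hq
  have hq0 : (q : ℂ) ≠ 0 := by simp_all
  have hqc : (c : ℂ) - q ≠ 0 := by
    rw [sub_ne_zero]
    exact_mod_cast fun h => hq (by simp [h])
  have hmul : ε ^ q * ((q : ℂ)⁻¹ + ((c : ℂ) - q)⁻¹)
      = ε ^ q * (c * ((q : ℂ)⁻¹ * ((c : ℂ) - q)⁻¹)) := by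
    field_simp
    ring
  rw [hmul, norm_mul, norm_zpow_of_sq_eq_one hε, one_mul, norm_mul, norm_mul]
  gcongr
  simp only [norm_inv, norm_pow, ← inv_pow]
  nlinarith [two_mul_le_add_sq ‖(q : ℂ)‖⁻¹ ‖(c : ℂ) - q‖⁻¹, sq_nonneg ‖(q : ℂ)‖⁻¹,
    sq_nonneg ‖(c : ℂ) - q‖⁻¹]

-- The series over `q⁻¹` and `(c - q)⁻¹` converge only conditionally, but the symmetric partial sums
-- of each of them tend to zero.
lemma hasSum_zpow_mul_inv_add_inv_sub (c : ℤ) :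
    HasSum (fun q : ℤ => ε ^ q * ((q : ℂ)⁻¹ + ((c : ℂ) - q)⁻¹)) 0 := by
  set a : ℤ → ℂ := fun q => ε ^ q * (q : ℂ)⁻¹
  have hodd (q : ℤ) : a (-q) = -a q := by
    simp only [a, zpow_neg_of_sq_eq_one hε, Int.cast_neg, inv_neg, mul_neg]
  have h0 : Tendsto a cofinite (𝓝 0) := by
    rw [tendsto_zero_iff_norm_tendsto_zero, ← cocompact_eq_cofinite ℤ]
    simpa [a, norm_zpow_of_sq_eq_one hε, Function.comp_def, Int.norm_eq_abs]
      using tendsto_inv_atTop_zero.comp (tendsto_norm_cocompact_atTop (E := ℤ))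
  have hsplit (q : ℤ) : ε ^ q * ((q : ℂ)⁻¹ + ((c : ℂ) - q)⁻¹) = a q - ε ^ c * a (q - c) := by
    have : ((c : ℂ) - q)⁻¹ = -((q : ℂ) - c)⁻¹ := by rw [← inv_neg, neg_sub]
    simp only [a, zpow_sub_of_sq_eq_one hε, Int.cast_sub, this]
    linear_combination ε ^ q * ((q : ℂ) - c)⁻¹ * zpow_mul_self_of_sq_eq_one hε c
  have hsum := (summable_zpow_mul_inv_add_inv_sub hε c).hasSum
  have hlim := (tendsto_sum_Ico_sub_of_odd hodd h0 0).sub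
    ((tendsto_sum_Ico_sub_of_odd hodd h0 c).const_mul (ε ^ c))
  simp only [Finset.mul_sum, ← Finset.sum_sub_distrib, sub_zero, ← hsplit, mul_zero] at hlim
  rwa [tendsto_nhds_unique (hsum.comp (Finset.tendsto_Ico_neg (R := ℤ))) hlim] at hsum

end PrincipalValue

/-- The series `∑ ε ^ q / q ^ k` over the integers `q ≠ 0`, for `k ≠ 0`; the excluded term vanishes
because `0⁻¹ = 0`. When `k = 1` the series is not summable and the default value `0` of `∑'` agrees
with the limit of its symmetric partial sums. -/
noncomputable def bilateralZeta (ε : ℂ) (k : ℕ) : ℂ :=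
  ∑' q : ℤ, ε ^ q * ((q : ℂ) ^ k)⁻¹

section BilateralZeta

variable {ε : ℂ} (hε : ε ^ 2 = 1)
include hε

lemma hasSum_bilateralZeta {k : ℕ} (hk : 2 ≤ k) :
    HasSum (fun q : ℤ => ε ^ q * ((q : ℂ) ^ k)⁻¹) (bilateralZeta ε k) := by
  refine (Summable.of_norm ?_).hasSum
  simpa only [norm_mul, norm_zpow_of_sq_eq_one hε, one_mul] using (summable_inv_intCast_pow hk).norm

lemma hasSum_bilateralZeta_sub {k : ℕ} (hk : 2 ≤ k) (c : ℤ) :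
    HasSum (fun q : ℤ => ε ^ q * (((c : ℂ) - q) ^ k)⁻¹) (ε ^ c * bilateralZeta ε k) := by
  convert! ((Equiv.subLeft c).hasSum_iff.mpr (hasSum_bilateralZeta hε hk)).mul_left (ε ^ c) using 2
    with q
  simp only [Function.comp_apply, Equiv.subLeft_apply, zpow_sub_of_sq_eq_one hε, Int.cast_sub]
  linear_combination -(ε ^ q * (((c : ℂ) - q) ^ k)⁻¹) * zpow_mul_self_of_sq_eq_one hε c

lemma bilateralZeta_of_odd {k : ℕ} (hk : Odd k) : bilateralZeta ε k = 0 := by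
  refine CharZero.eq_neg_self_iff.mp ?_
  rw [bilateralZeta, ← tsum_neg, ← (Equiv.neg ℤ).tsum_eq]
  simp only [Equiv.neg_apply, zpow_neg_of_sq_eq_one hε, Int.cast_neg, hk.neg_pow, inv_neg, mul_neg]

lemma bilateralZeta_of_even {k : ℕ} (hk : Even k) (hk0 : k ≠ 0) {s : ℂ}
    (hs : HasSum (fun n : ℕ => ε ^ n * ((n : ℂ) ^ k)⁻¹) s) : bilateralZeta ε k = 2 * s := by
  have h : HasSum (fun q : ℤ => ε ^ q * ((q : ℂ) ^ k)⁻¹) (s + s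
      - ε ^ (0 : ℤ) * (((0 : ℤ) : ℂ) ^ k)⁻¹) := by
    refine HasSum.of_nat_of_neg (by simpa using hs) ?_
    simpa [zpow_neg_of_sq_eq_one hε, hk.neg_pow] using hs
  simpa [bilateralZeta, hk0, two_mul] using h.tsum_eq

end BilateralZeta

/-- The principal part at `x = 0` of the partial fraction decomposition of
`1 / (x ^ (a + 1) * (N - x) ^ (b + 1))`, with `u i` in place of `1 / x ^ i`. -/
noncomputable def principalPart (N : ℂ) (a b : ℕ) (u : ℕ → ℂ) : ℂ :=
  ∑ p ∈ antidiagonal a, (b + p.2).choose b / N ^ (b + p.2 + 1) * u (p.1 + 1)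

section PartialFractions

lemma principalPart_zero_left (N : ℂ) (b : ℕ) (u : ℕ → ℂ) :
    principalPart N 0 b u = u 1 / N ^ (b + 1) := by
  simp [principalPart, div_eq_inv_mul]

variable {N : ℂ} (hN : N ≠ 0) (u : ℕ → ℂ)
include hN

lemma principalPart_zero_succ_mul (b : ℕ) :
    principalPart N 0 (b + 1) u * N = principalPart N 0 b u := by
  simp only [principalPart_zero_left]
  field_simp
  ring

lemma principalPart_succ_zero_mul (a : ℕ) :
    principalPart N (a + 1) 0 u * N = principalPart N a 0 u + u (a + 2) := by
  simp only [principalPart, Finset.Nat.sum_antidiagonal_succ', add_mul, Finset.sum_mul]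
  rw [add_comm]
  refine congr_arg₂ _ (Finset.sum_congr rfl fun p _ => ?_) ?_
  · simp only [zero_add, Nat.choose_zero_right, Nat.cast_one]
    field_simp
    ring
  · simp only [add_zero, Nat.choose_self, Nat.cast_one, zero_add, pow_one]
    field_simp

lemma principalPart_succ_succ_mul (a b : ℕ) :
    principalPart N (a + 1) (b + 1) u * N
      = principalPart N a (b + 1) u + principalPart N (a + 1) b u := by
  simp only [principalPart, Finset.Nat.sum_antidiagonal_succ', add_mul, Finset.sum_mul]
  rw [add_left_comm, ← Finset.sum_add_distrib]
  refine congr_arg₂ _ ?_ (Finset.sum_congr rfl fun p _ => ?_)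
  · simp only [add_zero, Nat.choose_self, Nat.cast_one]
    field_simp
    ring
  · have hpascal : (b + 1 + (p.2 + 1)).choose (b + 1)
        = (b + (p.2 + 1)).choose b + (b + 1 + p.2).choose (b + 1) := by
      rw [add_right_comm, Nat.choose_succ_succ, add_right_comm, add_assoc]
    rw [hpascal]
    push_cast
    field_simp
    ring

lemma inv_pow_mul_inv_pow_eq_principalPart {x y : ℂ} (hx : x ≠ 0) (hy : y ≠ 0) (hxy : x + y = N)
    (a b : ℕ) :
    (x ^ (a + 1))⁻¹ * (y ^ (b + 1))⁻¹
      = principalPart N a b (fun i => (x ^ i)⁻¹) + principalPart N b a fun i => (y ^ i)⁻¹ := by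
  induction a generalizing b with
  | zero =>
    induction b with
    | zero =>
      simp only [principalPart_zero_left]
      rw [← hxy] at hN ⊢
      field_simp
      ring
    | succ b ih =>
      refine mul_right_cancel₀ hN ?_
      rw [add_mul, principalPart_zero_succ_mul hN, principalPart_succ_zero_mul hN, ← add_assoc,
        ← ih, ← hxy]
      field_simp
      ring
  | succ a iha =>
    induction b with
    | zero =>
      refine mul_right_cancel₀ hN ?_
      rw [add_mul, principalPart_zero_succ_mul hN, principalPart_succ_zero_mul hN,
        add_right_comm (principalPart _ _ _ _), ← iha, ← hxy]
      field_simp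
      ring
    | succ b ihb =>
      refine mul_right_cancel₀ hN ?_
      rw [add_mul, principalPart_succ_succ_mul hN, principalPart_succ_succ_mul hN,
        add_comm (principalPart N b _ _), add_add_add_comm, ← iha, ← ihb, ← hxy]
      field_simp
      ring

end PartialFractions

section PartialFractionSums

variable {N : ℤ}

lemma hasSum_principalPart_add_principalPart (a b : ℕ) {w : ℤ → ℂ} {S S' : ℕ → ℂ}
    (h1 : HasSum (fun q : ℤ => w q * ((q : ℂ)⁻¹ + ((N : ℂ) - q)⁻¹)) (S 1 + S' 1))
    (hS : ∀ i, 2 ≤ i → HasSum (fun q : ℤ => w q * ((q : ℂ) ^ i)⁻¹) (S i))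
    (hS' : ∀ i, 2 ≤ i → HasSum (fun q : ℤ => w q * (((N : ℂ) - q) ^ i)⁻¹) (S' i)) :
    HasSum (fun q : ℤ => w q * (principalPart N a b (fun i => ((q : ℂ) ^ i)⁻¹)
        + principalPart N b a fun i => (((N : ℂ) - q) ^ i)⁻¹))
      (principalPart N a b S + principalPart N b a S') := by
  have hsplit (c d : ℕ) (u : ℕ → ℂ) : principalPart N c d u
      = (d + c).choose d / (N : ℂ) ^ (d + c + 1) * u 1 + ∑ p ∈ (antidiagonal c).erase (0, c),
          (d + p.2).choose d / (N : ℂ) ^ (d + p.2 + 1) * u (p.1 + 1) := by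
    rw [principalPart, ← Finset.add_sum_erase _ _ (by simp : (0, c) ∈ antidiagonal c), zero_add]
  have hsum (c d : ℕ) {v : ℤ → ℕ → ℂ} {U : ℕ → ℂ}
      (hv : ∀ i, 2 ≤ i → HasSum (fun q => w q * v q i) (U i)) :
      HasSum (fun q => w q * ∑ p ∈ (antidiagonal c).erase (0, c),
          (d + p.2).choose d / (N : ℂ) ^ (d + p.2 + 1) * v q (p.1 + 1))
        (∑ p ∈ (antidiagonal c).erase (0, c),
          (d + p.2).choose d / (N : ℂ) ^ (d + p.2 + 1) * U (p.1 + 1)) := by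
    simp only [Finset.mul_sum, mul_left_comm (w _)]
    refine hasSum_sum fun p hp => (hv _ ?_).mul_left _
    grind [Finset.HasAntidiagonal.mem_antidiagonal]
  convert! (h1.mul_left ((b + a).choose b / (N : ℂ) ^ (b + a + 1))).add
    ((hsum a b hS).add (hsum b a hS')) using 1
  · ext q
    rw [hsplit, hsplit, add_comm a b, Nat.choose_symm_add, pow_one, pow_one]
    ring
  · rw [hsplit, hsplit, add_comm a b, Nat.choose_symm_add]
    ring

lemma hasSum_mul_inv_pow_mul_inv_sub_pow (hN : N ≠ 0) (a b : ℕ) {w : ℤ → ℂ} {S S' : ℕ → ℂ}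
    (h1 : HasSum (fun q : ℤ => w q * ((q : ℂ)⁻¹ + ((N : ℂ) - q)⁻¹)) (S 1 + S' 1))
    (hS : ∀ i, 2 ≤ i → HasSum (fun q : ℤ => w q * ((q : ℂ) ^ i)⁻¹) (S i))
    (hS' : ∀ i, 2 ≤ i → HasSum (fun q : ℤ => w q * (((N : ℂ) - q) ^ i)⁻¹) (S' i)) :
    HasSum (fun q : ℤ => w q * (((q : ℂ) ^ (a + 1))⁻¹ * (((N : ℂ) - q) ^ (b + 1))⁻¹))
      (principalPart N a b S + principalPart N b a S'
        - w 0 * principalPart N b a (fun i => ((N : ℂ) ^ i)⁻¹)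
        - w N * principalPart N a b (fun i => ((N : ℂ) ^ i)⁻¹)) := by
  have hN' : (N : ℂ) ≠ 0 := Int.cast_ne_zero.mpr hN
  have hzero (c d : ℕ) : principalPart (N : ℂ) c d (fun i => ((0 : ℂ) ^ i)⁻¹) = 0 := by
    simp [principalPart]
  refine (((hasSum_principalPart_add_principalPart a b h1 hS hS').sub (hasSum_ite_eq 0 _)).sub
    (hasSum_ite_eq N _)).congr_fun fun q => ?_
  rcases eq_or_ne q 0 with rfl | hq0
  · simp [hzero, hN.symm]
  rcases eq_or_ne q N with rfl | hqN
  · simp [hzero, hN]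
  have hsub : (N : ℂ) - q ≠ 0 := sub_ne_zero.mpr (Int.cast_injective.ne hqN.symm)
  rw [inv_pow_mul_inv_pow_eq_principalPart hN' (Int.cast_ne_zero.mpr hq0) hsub (by ring)]
  simp [hq0, hqN]

end PartialFractionSums

/-- The convolution sum `∑ ε ^ q / (q ^ a * (N - q) ^ b)` over the integers `q ≠ 0, N`; the excluded
terms vanish because `0⁻¹ = 0`. -/
noncomputable def convSum (ε : ℂ) (a b : ℕ) (N : ℤ) : ℂ :=
  ∑' q : ℤ, ε ^ q * (((q : ℂ) ^ a)⁻¹ * (((N : ℂ) - q) ^ b)⁻¹)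

section ConvSum

variable {ε : ℂ} (hε : ε ^ 2 = 1)

lemma principalPart_const_mul (N : ℂ) (a b : ℕ) (c : ℂ) (u : ℕ → ℂ) :
    principalPart N a b (fun i => c * u i) = c * principalPart N a b u := by
  simp only [principalPart, Finset.mul_sum, mul_left_comm]

include hε

lemma hasSum_zpow_mul_inv_pow_mul_inv_sub_pow {N : ℤ} (hN : N ≠ 0) (a b : ℕ) :
    HasSum (fun q : ℤ => ε ^ q * (((q : ℂ) ^ (a + 1))⁻¹ * (((N : ℂ) - q) ^ (b + 1))⁻¹))
      (principalPart N a b (bilateralZeta ε) + ε ^ N * principalPart N b a (bilateralZeta ε)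
        - principalPart N b a (fun i => ((N : ℂ) ^ i)⁻¹)
        - ε ^ N * principalPart N a b fun i => ((N : ℂ) ^ i)⁻¹) := by
  have h1 : HasSum (fun q : ℤ => ε ^ q * ((q : ℂ)⁻¹ + ((N : ℂ) - q)⁻¹))
      (bilateralZeta ε 1 + ε ^ N * bilateralZeta ε 1) := by
    simpa [bilateralZeta_of_odd hε odd_one] using hasSum_zpow_mul_inv_add_inv_sub hε N
  have h := hasSum_mul_inv_pow_mul_inv_sub_pow hN a b h1 (fun i => hasSum_bilateralZeta hε)
    fun i hi => hasSum_bilateralZeta_sub hε hi N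
  simpa only [principalPart_const_mul, zpow_zero, one_mul] using h

lemma hasSum_convSum {N : ℤ} (hN : N ≠ 0) {a b : ℕ} (ha : a ≠ 0) (hb : b ≠ 0) :
    HasSum (fun q : ℤ => ε ^ q * (((q : ℂ) ^ a)⁻¹ * (((N : ℂ) - q) ^ b)⁻¹)) (convSum ε a b N) := by
  obtain ⟨a, rfl⟩ := Nat.exists_eq_succ_of_ne_zero ha
  obtain ⟨b, rfl⟩ := Nat.exists_eq_succ_of_ne_zero hb
  exact (hasSum_zpow_mul_inv_pow_mul_inv_sub_pow hε hN a b).summable.hasSum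

lemma convSum_eq_principalPart {N : ℤ} (hN : N ≠ 0) (a b : ℕ) :
    convSum ε (a + 1) (b + 1) N
      = principalPart N a b (bilateralZeta ε) + ε ^ N * principalPart N b a (bilateralZeta ε)
        - principalPart N b a (fun i => ((N : ℂ) ^ i)⁻¹)
        - ε ^ N * principalPart N a b fun i => ((N : ℂ) ^ i)⁻¹ :=
  (hasSum_zpow_mul_inv_pow_mul_inv_sub_pow hε hN a b).tsum_eq

lemma hasSum_convSum_reflect {N : ℤ} (hN : N ≠ 0) (M : ℤ) {a b : ℕ} (ha : a ≠ 0) (hb : b ≠ 0)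
    (hb' : Even b) :
    HasSum (fun q : ℤ => ε ^ q * ((((M - N : ℤ) : ℂ) - q) ^ b)⁻¹ * (((M : ℂ) - q) ^ a)⁻¹)
      (ε ^ M * convSum ε a b N) := by
  convert! ((Equiv.subLeft M).hasSum_iff.mpr (hasSum_convSum hε hN ha hb)).mul_left (ε ^ M) using 2
    with q
  have hflip : (N : ℂ) - (M - q) = -(M - N - q) := by ring
  simp only [Function.comp_apply, Equiv.subLeft_apply, zpow_sub_of_sq_eq_one hε, Int.cast_sub,
    hflip, hb'.neg_pow]
  linear_combination -(ε ^ q * ((((M : ℂ) - N) - q) ^ b)⁻¹ * (((M : ℂ) - q) ^ a)⁻¹)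
    * zpow_mul_self_of_sq_eq_one hε M

end ConvSum

/-- Half of the sum `∑ ε ^ r / (r ^ (a + 1) * (N - r) ^ (a + 1) * (q - r) ^ b)` over the integers
`r ≠ 0, N, q`: the contribution of the principal part at `r = 0`, together with the correction for
the excluded term `r = 0`. The other half is `ε ^ N * innerHalf ε a b N (N - q)`. -/
noncomputable def innerHalf (ε : ℂ) (a b : ℕ) (N q : ℤ) : ℂ :=
  principalPart N a a (fun i => convSum ε i b q)
    - ((q : ℂ) ^ b)⁻¹ * principalPart N a a fun i => ((N : ℂ) ^ i)⁻¹

section DoubleSum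

variable {ε : ℂ} (hε : ε ^ 2 = 1) {N : ℤ} (hN : N ≠ 0)
include hε

lemma hasSum_add_reflect {f : ℤ → ℂ} {s : ℂ} (a : ℕ)
    (h : HasSum (fun q : ℤ => ε ^ q * (((q : ℂ) ^ a)⁻¹ * (((N : ℂ) - q) ^ a)⁻¹) * f q) s) :
    HasSum (fun q : ℤ => ε ^ q * (((q : ℂ) ^ a)⁻¹ * (((N : ℂ) - q) ^ a)⁻¹)
      * (f q + ε ^ N * f (N - q))) (2 * s) := by
  rw [two_mul]
  convert! h.add ((Equiv.subLeft N).hasSum_iff.mpr h) using 2 with q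
  simp only [Function.comp_apply, Equiv.subLeft_apply, zpow_sub_of_sq_eq_one hε, Int.cast_sub,
    sub_sub_cancel]
  ring

include hN

lemma hasSum_innerHalf_add_innerHalf {q : ℤ} (hq : q ≠ 0) (hqN : q ≠ N) (a : ℕ) {b : ℕ}
    (hb : b ≠ 0) (hb' : Even b) :
    HasSum (fun r : ℤ => ε ^ r * (((q : ℂ) - r) ^ b)⁻¹
        * (((r : ℂ) ^ (a + 1))⁻¹ * (((N : ℂ) - r) ^ (a + 1))⁻¹))
      (innerHalf ε a b N q + ε ^ N * innerHalf ε a b N (N - q)) := by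
  have hNq : N - q ≠ 0 := sub_ne_zero.mpr hqN.symm
  have hzero {i : ℕ} (hi : i ≠ 0) : HasSum
      (fun r : ℤ => ε ^ r * (((q : ℂ) - r) ^ b)⁻¹ * ((r : ℂ) ^ i)⁻¹) (convSum ε i b q) := by
    simpa only [mul_assoc, mul_comm (((q : ℂ) - _) ^ _)⁻¹] using hasSum_convSum hε hq hi hb
  have htop {i : ℕ} (hi : i ≠ 0) : HasSum
      (fun r : ℤ => ε ^ r * (((q : ℂ) - r) ^ b)⁻¹ * (((N : ℂ) - r) ^ i)⁻¹)
      (ε ^ N * convSum ε i b (N - q)) := by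
    simpa only [sub_sub_cancel] using hasSum_convSum_reflect hε hNq N hi hb hb'
  have h := hasSum_mul_inv_pow_mul_inv_sub_pow hN a a (S := fun i => convSum ε i b q)
    (S' := fun i => ε ^ N * convSum ε i b (N - q))
    (by simpa only [mul_add, pow_one] using (hzero one_ne_zero).add (htop one_ne_zero))
    (fun i hi => hzero (by lia)) (fun i hi => htop (by lia))
  convert! h using 1
  have hflip : (q : ℂ) - N = -(N - q) := by ring
  simp only [innerHalf, principalPart_const_mul, hflip, hb'.neg_pow, Int.cast_sub, Int.cast_zero,
    sub_zero, zpow_zero, one_mul]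
  ring

end DoubleSum

section Evaluation

variable {ε : ℂ} (hε : ε ^ 2 = 1)
include hε

lemma convSum_one_two {q : ℤ} (hq : q ≠ 0) :
    convSum ε 1 2 q = ε ^ q * bilateralZeta ε 2 / q - (2 + ε ^ q) / q ^ 3 := by
  have hq' : (q : ℂ) ≠ 0 := Int.cast_ne_zero.mpr hq
  rw [convSum_eq_principalPart hε hq 0 1]
  simp only [principalPart, Finset.Nat.sum_antidiagonal_succ, Finset.Nat.antidiagonal_zero,
    Finset.sum_singleton, zero_add, bilateralZeta_of_odd hε odd_one, Nat.choose]
  push_cast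
  field_simp
  ring

lemma convSum_two_two {q : ℤ} (hq : q ≠ 0) :
    convSum ε 2 2 q = (1 + ε ^ q) * (bilateralZeta ε 2 / q ^ 2 - 3 / q ^ 4) := by
  have hq' : (q : ℂ) ≠ 0 := Int.cast_ne_zero.mpr hq
  rw [convSum_eq_principalPart hε hq 1 1]
  simp only [principalPart, Finset.Nat.sum_antidiagonal_succ, Finset.Nat.antidiagonal_zero,
    Finset.sum_singleton, zero_add, bilateralZeta_of_odd hε odd_one, Nat.choose]
  push_cast
  field_simp
  ring

lemma convSum_three_two {q : ℤ} (hq : q ≠ 0) :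
    convSum ε 3 2 q
      = (2 + ε ^ q) * bilateralZeta ε 2 / q ^ 3 - (4 + 6 * ε ^ q) / q ^ 5 := by
  have hq' : (q : ℂ) ≠ 0 := Int.cast_ne_zero.mpr hq
  rw [convSum_eq_principalPart hε hq 2 1]
  simp only [principalPart, Finset.Nat.sum_antidiagonal_succ, Finset.Nat.antidiagonal_zero,
    Finset.sum_singleton, zero_add, Nat.reduceAdd, bilateralZeta_of_odd hε odd_one,
    bilateralZeta_of_odd hε (by decide : Odd 3), Nat.choose]
  push_cast
  field_simp
  ring

lemma innerHalf_two_two (N : ℤ) {q : ℤ} (hq : q ≠ 0) :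
    innerHalf ε 2 2 N q
      = ((2 + ε ^ q) * bilateralZeta ε 2 / q ^ 3 - (4 + 6 * ε ^ q) / q ^ 5) / N ^ 3
        + 3 * ((1 + ε ^ q) * (bilateralZeta ε 2 / q ^ 2 - 3 / q ^ 4)) / N ^ 4
        + 6 * (ε ^ q * bilateralZeta ε 2 / q - (2 + ε ^ q) / q ^ 3) / N ^ 5
        - 10 / (N ^ 6 * q ^ 2) := by
  rw [innerHalf, ← convSum_one_two hε hq, ← convSum_two_two hε hq, ← convSum_three_two hε hq]
  simp only [principalPart, Finset.Nat.sum_antidiagonal_succ, Finset.Nat.antidiagonal_zero,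
    Finset.sum_singleton, Nat.choose]
  push_cast
  ring

lemma hasSum_innerHalf_two_two {N : ℤ} (hN : N ≠ 0) :
    HasSum (fun q : ℤ => ε ^ q * (((q : ℂ) ^ 3)⁻¹ * (((N : ℂ) - q) ^ 3)⁻¹) * innerHalf ε 2 2 N q)
      ((bilateralZeta ε 2 * (2 * convSum ε 6 3 N + convSum 1 6 3 N)
          - (4 * convSum ε 8 3 N + 6 * convSum 1 8 3 N)) / N ^ 3
        + 3 * (bilateralZeta ε 2 * (convSum ε 5 3 N + convSum 1 5 3 N)
          - 3 * (convSum ε 7 3 N + convSum 1 7 3 N)) / N ^ 4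
        + 6 * (bilateralZeta ε 2 * convSum 1 4 3 N
          - (2 * convSum ε 6 3 N + convSum 1 6 3 N)) / N ^ 5
        - 10 * convSum ε 5 3 N / N ^ 6) := by
  have hT {a : ℕ} (ha : a ≠ 0) := hasSum_convSum hε hN ha three_ne_zero
  have hT' {a : ℕ} (ha : a ≠ 0) := hasSum_convSum (one_pow 2) hN ha three_ne_zero
  have h6 := ((hT (a := 6) (by simp)).mul_left 2).add (hT' (a := 6) (by simp))
  have h8 := ((hT (a := 8) (by simp)).mul_left 4).add ((hT' (a := 8) (by simp)).mul_left 6)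
  have h5 := (hT (a := 5) (by simp)).add (hT' (a := 5) (by simp))
  have h7 := (hT (a := 7) (by simp)).add (hT' (a := 7) (by simp))
  convert! ((((h6.mul_left (bilateralZeta ε 2)).sub h8).div_const ((N : ℂ) ^ 3)).add
    ((((h5.mul_left (bilateralZeta ε 2)).sub (h7.mul_left 3)).mul_left 3).div_const
      ((N : ℂ) ^ 4))).add
    (((((hT' (a := 4) (by simp)).mul_left (bilateralZeta ε 2)).sub h6).mul_left 6).div_const
      ((N : ℂ) ^ 5)) |>.sub (((hT (a := 5) (by simp)).mul_left 10).div_const ((N : ℂ) ^ 6)) using 1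
  ext q
  rcases eq_or_ne q 0 with rfl | hq
  · simp
  rw [innerHalf_two_two hε N hq, one_zpow]
  linear_combination ((q : ℂ) ^ 3)⁻¹ * (((N : ℂ) - q) ^ 3)⁻¹ * zpow_mul_self_of_sq_eq_one hε q
    * ((bilateralZeta ε 2 / q ^ 3 - 6 / q ^ 5) / N ^ 3
      + 3 * (bilateralZeta ε 2 / q ^ 2 - 3 / q ^ 4) / N ^ 4
      + 6 * (bilateralZeta ε 2 / q - 1 / q ^ 3) / N ^ 5)

end Evaluation

section ZetaValues

lemma hasSum_inv_pow_riemannZeta {k : ℕ} (hk : 1 < k) :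
    HasSum (fun n : ℕ => ((n : ℂ) ^ k)⁻¹) (riemannZeta k) := by
  have hsum : Summable fun n : ℕ => 1 / (n : ℂ) ^ k :=
    Summable.of_norm (by simpa using Real.summable_one_div_nat_pow.mpr hk)
  simpa only [zeta_nat_eq_tsum_of_gt_one hk, one_div] using hsum.hasSum

lemma hasSum_neg_one_pow_mul_inv_pow {k : ℕ} {s : ℂ}
    (hs : HasSum (fun n : ℕ => ((n : ℂ) ^ k)⁻¹) s) :
    HasSum (fun n : ℕ => (-1) ^ n * ((n : ℂ) ^ k)⁻¹) ((2 / 2 ^ k - 1) * s) := by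
  have hinj : Function.Injective fun n : ℕ => 2 * n := mul_right_injective₀ two_ne_zero
  have heven : HasSum (fun n : ℕ => if Even n then ((n : ℂ) ^ k)⁻¹ else 0) ((2 ^ k)⁻¹ * s) := by
    rw [← hinj.hasSum_iff fun n hn => if_neg fun ⟨m, h⟩ => hn ⟨m, by lia⟩]
    simpa [Function.comp_def, mul_pow, mul_comm] using hs.mul_left (2 ^ k)⁻¹
  convert! (heven.mul_left 2).sub hs using 1
  · ext n
    rcases n.even_or_odd with hn | hn
    · rw [hn.neg_one_pow, if_pos hn]
      ring
    · rw [hn.neg_one_pow, if_neg (Nat.not_even_iff_odd.mpr hn)]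
      ring
  · ring

lemma riemannZeta_six : riemannZeta 6 = (π : ℂ) ^ 6 / 945 := by
  have hb : bernoulli (2 * 3) = 1 / 42 := by decide +kernel
  rw [show (6 : ℂ) = 2 * (3 : ℕ) by norm_num, riemannZeta_two_mul_nat (by simp), hb]
  simp only [Nat.factorial]
  push_cast
  ring

lemma riemannZeta_eight : riemannZeta 8 = (π : ℂ) ^ 8 / 9450 := by
  have hb : bernoulli (2 * 4) = -1 / 30 := by decide +kernel
  rw [show (8 : ℂ) = 2 * (4 : ℕ) by norm_num, riemannZeta_two_mul_nat (by simp), hb]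
  simp only [Nat.factorial]
  push_cast
  ring

lemma bilateralZeta_one {k : ℕ} (hk : Even k) (hk1 : 1 < k) :
    bilateralZeta 1 k = 2 * riemannZeta k :=
  bilateralZeta_of_even (one_pow 2) hk (by lia) (by simpa using hasSum_inv_pow_riemannZeta hk1)

lemma bilateralZeta_neg_one {k : ℕ} (hk : Even k) (hk1 : 1 < k) :
    bilateralZeta (-1) k = 2 * ((2 / 2 ^ k - 1) * riemannZeta k) :=
  bilateralZeta_of_even neg_one_sq hk (by lia)
    (hasSum_neg_one_pow_mul_inv_pow (hasSum_inv_pow_riemannZeta hk1))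

end ZetaValues

section LatticeSum

lemma hasSum_innerHalf_two_two_neg_one {N : ℤ} (hN : N ≠ 0) :
    HasSum (fun q : ℤ => (-1) ^ q * (((q : ℂ) ^ 3)⁻¹ * (((N : ℂ) - q) ^ 3)⁻¹)
        * innerHalf (-1) 2 2 N q)
      ((3624 + 2258 * (-1) ^ N) / N ^ 14 + π ^ 2 * (217 / 3 * (-1) ^ N - 13 / 3) / N ^ 12
        + π ^ 4 * (3 / 4 * (-1) ^ N - 157 / 30) / N ^ 10 - π ^ 6 * (67 / 2520) / N ^ 8
        - π ^ 8 / 10080 / N ^ 6) := by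
  convert! hasSum_innerHalf_two_two neg_one_sq hN using 1
  have hN' : (N : ℂ) ≠ 0 := Int.cast_ne_zero.mpr hN
  have hm (a : ℕ) := convSum_eq_principalPart neg_one_sq hN a 2
  have hp (a : ℕ) := convSum_eq_principalPart (one_pow 2) hN a 2
  have hm_odd {k : ℕ} (hk : Odd k) := bilateralZeta_of_odd neg_one_sq hk
  have hp_odd {k : ℕ} (hk : Odd k) := bilateralZeta_of_odd (one_pow 2) hk
  simp (discharger := decide) only [hm 4, hm 5, hm 6, hm 7, hp 3, hp 4, hp 5, hp 6, hp 7,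
    principalPart, Finset.Nat.sum_antidiagonal_succ, Finset.Nat.antidiagonal_zero,
    Finset.sum_singleton, zero_add, Nat.reduceAdd, Nat.choose, one_zpow, hm_odd, hp_odd,
    bilateralZeta_one, bilateralZeta_neg_one, Nat.cast_ofNat, riemannZeta_two, riemannZeta_four,
    riemannZeta_six, riemannZeta_eight]
  push_cast
  obtain hw | hw : (-1 : ℂ) ^ N = 1 ∨ (-1 : ℂ) ^ N = -1 :=
    N.even_or_odd.imp Even.neg_one_zpow Odd.neg_one_zpow
  all_goals
    rw [hw]
    field_simp
    ring

/-- The summand of the lattice sum over `N`, `q`, `r`, in which the six positive roots of `A₃` are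
`N`, `q`, `r` and their pairwise differences; degenerate terms vanish because `0⁻¹ = 0`. -/
noncomputable def latticeTerm (N q r : ℤ) : ℂ :=
  (-1) ^ (N + q + r) * (((N : ℂ) ^ 3)⁻¹ * (((q : ℂ) ^ 3)⁻¹ * (((N : ℂ) - q) ^ 3)⁻¹)
    * (((r : ℂ) ^ 3)⁻¹ * (((N : ℂ) - r) ^ 3)⁻¹) * (((q : ℂ) - r) ^ 2)⁻¹)

lemma tsum_latticeTerm_fibre {N : ℤ} (hN : N ≠ 0) :
    ∑' (q : ℤ) (r : ℤ), latticeTerm N q r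
      = (4516 + 7248 * (-1) ^ N) / N ^ 17 + π ^ 2 * (434 / 3 - 26 / 3 * (-1) ^ N) / N ^ 15
        + π ^ 4 * (3 / 2 - 157 / 15 * (-1) ^ N) / N ^ 13
        - π ^ 6 * (67 / 1260 * (-1) ^ N) / N ^ 11 - π ^ 8 * (1 / 5040 * (-1) ^ N) / N ^ 9 := by
  have hinner (q : ℤ) : ∑' r : ℤ, latticeTerm N q r
      = (-1) ^ N * ((N : ℂ) ^ 3)⁻¹ * ((-1) ^ q * (((q : ℂ) ^ 3)⁻¹ * (((N : ℂ) - q) ^ 3)⁻¹)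
        * (innerHalf (-1) 2 2 N q + (-1) ^ N * innerHalf (-1) 2 2 N (N - q))) := by
    rcases eq_or_ne q 0 with rfl | hq
    · simp [latticeTerm]
    rcases eq_or_ne q N with rfl | hqN
    · simp [latticeTerm]
    rw [← (hasSum_innerHalf_add_innerHalf neg_one_sq hN hq hqN 2 two_ne_zero even_two).tsum_eq,
      ← tsum_mul_left, ← tsum_mul_left]
    refine tsum_congr fun r => ?_
    rw [latticeTerm, zpow_add₀ (by simp), zpow_add₀ (by simp)]
    ring
  have houter := hasSum_add_reflect neg_one_sq 3 (hasSum_innerHalf_two_two_neg_one hN)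
  simp only [hinner, tsum_mul_left, houter.tsum_eq]
  have hN' : (N : ℂ) ≠ 0 := Int.cast_ne_zero.mpr hN
  obtain hw | hw : (-1 : ℂ) ^ N = 1 ∨ (-1 : ℂ) ^ N = -1 :=
    N.even_or_odd.imp Even.neg_one_zpow Odd.neg_one_zpow
  all_goals
    rw [hw]
    field_simp
    ring

end LatticeSum

section Chambers

/-- The summand of `ζ₃((2, 3, 3, 3, 3, 3), λ₂∨; SU(4))`. -/
noncomputable def su4Term (l m n : ℕ) : ℂ :=
  (-1) ^ (l + n) / ((l : ℂ) ^ 2 * (m : ℂ) ^ 3 * (n : ℂ) ^ 3 * ((l + m : ℕ) : ℂ) ^ 3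
    * ((m + n : ℕ) : ℂ) ^ 3 * ((l + m + n : ℕ) : ℂ) ^ 3)

lemma su4Term_eq_latticeTerm (l m n : ℕ) :
    su4Term l m n = latticeTerm n (l + m + n) (m + n) := by
  have hsign : (-1 : ℂ) ^ ((n : ℤ) + (l + m + n) + (m + n)) = (-1) ^ (l + n) := by
    rw [show (n : ℤ) + (l + m + n) + (m + n) = (l + n : ℕ) + ((m + n) + (m + n)) by push_cast; ring,
      zpow_add₀ (by simp), Even.neg_one_zpow ⟨_, rfl⟩, mul_one, zpow_natCast]
  have hlm : (n : ℂ) - (l + m + n) = -(l + m) := by ring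
  have hm : (n : ℂ) - (m + n) = -m := by ring
  have hl : (l : ℂ) + m + n - (m + n) = l := by ring
  rw [su4Term, latticeTerm, hsign]
  push_cast
  rw [hlm, hm, hl, Odd.neg_pow (n := 3) (by decide), Odd.neg_pow (n := 3) (by decide)]
  field_simp

lemma latticeTerm_eq_of_prod_eq {N q r e k d P : ℤ} (he : N + q + r = e + (k + k))
    (hd : q - r = d) (hP : N * q * (N - q) * r * (N - r) * (q - r) = P) :
    latticeTerm N q r = (-1) ^ e * (d / P ^ 3) := by
  have hsign : (-1 : ℂ) ^ (N + q + r) = (-1) ^ e := by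
    rw [he, zpow_add₀ (by simp), Even.neg_one_zpow ⟨k, rfl⟩, mul_one]
  rw [latticeTerm, hsign, ← hP, ← hd]
  push_cast
  rcases eq_or_ne q r with rfl | hqr
  · simp
  have hqr' : (q : ℂ) - r ≠ 0 := sub_ne_zero.mpr (by exact_mod_cast hqr)
  field_simp

lemma sum_latticeTerm_chambers (l m n : ℕ) :
    latticeTerm l (-m) (-m - n) + latticeTerm (l + m) m (-n) + latticeTerm (l + m + n) (m + n) n
        + latticeTerm m (l + m) (-n) + latticeTerm (m + n) (l + m + n) n
        + latticeTerm n (l + m + n) (m + n)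
      = su4Term l m n + su4Term n m l := by
  obtain ⟨P, hP⟩ : ∃ P : ℤ, P = l * m * n * (l + m) * (m + n) * (l + m + n) := ⟨_, rfl⟩
  have h {N q r k d P : ℤ} := latticeTerm_eq_of_prod_eq (N := N) (q := q) (r := r) (e := l + n)
    (k := k) (d := d) (P := P)
  rw [su4Term_eq_latticeTerm l m n, su4Term_eq_latticeTerm n m l,
    h (q := -m) (k := -m - n) (d := n) (P := P) (by ring) (by ring) (by rw [hP]; ring),
    h (N := l + m) (k := m - n) (d := m + n) (P := -P) (by ring) (by ring) (by rw [hP]; ring),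
    h (N := l + m + n) (k := m + n) (d := m) (P := P) (by ring) (by ring) (by rw [hP]; ring),
    h (N := m) (k := m - n) (d := l + m + n) (P := P) (by ring) (by ring) (by rw [hP]; ring),
    h (N := m + n) (k := m + n) (d := l + m) (P := -P) (by ring) (by ring) (by rw [hP]; ring),
    h (N := l) (k := m + l) (d := n) (P := P) (by ring) (by ring) (by rw [hP]; ring)]
  push_cast
  ring

/-- The six orders of `0`, `N`, `q`, `r` on the line with `0 < N` and `r < q`, each parametrized
by its three gaps. All gaps, and `N` itself, are recorded minus one. -/
def chamber : Fin 6 → ℕ × ℕ × ℕ → ℕ × ℤ × ℤ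
  | 0, (l, m, n) => (l, -(m + 1), -(m + 1) - (n + 1))
  | 1, (l, m, n) => (l + m + 1, m + 1, -(n + 1))
  | 2, (l, m, n) => (l + m + n + 2, m + n + 2, n + 1)
  | 3, (l, m, n) => (m, l + m + 2, -(n + 1))
  | 4, (l, m, n) => (m + n + 1, l + m + n + 3, n + 1)
  | 5, (l, m, n) => (n, l + m + n + 3, m + n + 2)

lemma chamber_injective :
    Function.Injective fun p : (ℕ × ℕ × ℕ) × Fin 6 => chamber p.2 p.1 := by
  rintro ⟨⟨l, m, n⟩, i⟩ ⟨⟨l', m', n'⟩, j⟩ h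
  fin_cases i <;> fin_cases j <;> simp [chamber] at h ⊢ <;> omega

lemma chamber_mem (i : Fin 6) (t : ℕ × ℕ × ℕ) :
    chamber i t ∈ {x : ℕ × ℤ × ℤ | x.2.2 < x.2.1} := by
  fin_cases i <;> simp [chamber] <;> omega

lemma exists_chamber_eq {n : ℕ} {q r : ℤ} (hrq : r < q) (hq : q ≠ 0) (hqn : q ≠ n + 1)
    (hr : r ≠ 0) (hrn : r ≠ n + 1) : ∃ i t, chamber i t = (n, q, r) := by
  rcases hq.lt_or_gt with hq | hq
  · exact ⟨0, (n, (-q - 1).toNat, (q - r - 1).toNat), by simp [chamber]; omega⟩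
  rcases hr.lt_or_gt with hr | hr <;> rcases hqn.lt_or_gt with hqn | hqn
  · exact ⟨1, ((n - q).toNat, (q - 1).toNat, (-r - 1).toNat), by simp [chamber]; omega⟩
  · exact ⟨3, ((q - n - 2).toNat, n, (-r - 1).toNat), by simp [chamber]; omega⟩
  · exact ⟨2, ((n - q).toNat, (q - r - 1).toNat, (r - 1).toNat), by simp [chamber]; omega⟩
  rcases hrn.lt_or_gt with hrn | hrn
  · exact ⟨4, ((q - n - 2).toNat, (n - r).toNat, (r - 1).toNat), by simp [chamber]; omega⟩
  · exact ⟨5, ((q - r - 1).toNat, (r - n - 2).toNat, n), by simp [chamber]; omega⟩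

end Chambers

section Rearrangement

lemma norm_inv_intCast_pow_le_one (z : ℤ) (k : ℕ) : ‖((z : ℂ) ^ k)⁻¹‖ ≤ 1 := by
  rw [norm_inv, norm_pow, Complex.norm_intCast]
  rcases eq_or_ne z 0 with rfl | hz
  · cases k <;> simp
  · exact inv_le_one_of_one_le₀ (one_le_pow₀ (by exact_mod_cast Int.one_le_abs hz))

lemma norm_latticeTerm_le (N q r : ℤ) :
    ‖latticeTerm N q r‖ ≤ ‖((N : ℂ) ^ 3)⁻¹‖ * (‖((q : ℂ) ^ 3)⁻¹‖ * ‖((r : ℂ) ^ 3)⁻¹‖) := by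
  have hNq := norm_inv_intCast_pow_le_one (N - q) 3
  have hNr := norm_inv_intCast_pow_le_one (N - r) 3
  have hqr := norm_inv_intCast_pow_le_one (q - r) 2
  push_cast at hNq hNr hqr
  rw [latticeTerm, norm_mul, norm_zpow_of_sq_eq_one neg_one_sq, one_mul]
  simp only [norm_mul]
  calc _ ≤ ‖((N : ℂ) ^ 3)⁻¹‖ * (‖((q : ℂ) ^ 3)⁻¹‖ * 1) * (‖((r : ℂ) ^ 3)⁻¹‖ * 1) * 1 := by gcongr
    _ = _ := by ring

lemma summable_latticeTerm :
    Summable fun x : ℕ × ℤ × ℤ => latticeTerm (x.1 + 1) x.2.1 x.2.2 := by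
  have hz : Summable fun q : ℤ => ‖((q : ℂ) ^ 3)⁻¹‖ :=
    (summable_inv_intCast_pow (Nat.le_succ 2)).norm
  have hn : Summable fun n : ℕ => ‖(((n + 1 : ℤ) : ℂ) ^ 3)⁻¹‖ :=
    hz.comp_injective fun a b h => by simpa using h
  have hzz := hz.mul_of_nonneg hz (fun _ => norm_nonneg _) fun _ => norm_nonneg _
  exact .of_norm_bounded
    (hn.mul_of_nonneg hzz (fun _ => norm_nonneg _) fun _ => by positivity)
    fun x => norm_latticeTerm_le _ _ _

lemma summable_su4Term :
    Summable fun t : ℕ × ℕ × ℕ => su4Term (t.1 + 1) (t.2.1 + 1) (t.2.2 + 1) := by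
  have hinj : Function.Injective (chamber 5) := fun t t' h =>
    congrArg Prod.fst (chamber_injective (a₁ := (t, 5)) (a₂ := (t', 5)) h)
  convert! summable_latticeTerm.comp_injective hinj using 2 with t
  simp only [su4Term_eq_latticeTerm, Function.comp_apply, chamber]
  push_cast
  ring_nf

lemma sum_latticeTerm_chamber (t : ℕ × ℕ × ℕ) :
    ∑ i, latticeTerm ((chamber i t).1 + 1) (chamber i t).2.1 (chamber i t).2.2
      = su4Term (t.1 + 1) (t.2.1 + 1) (t.2.2 + 1) + su4Term (t.2.2 + 1) (t.2.1 + 1) (t.1 + 1) := by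
  rw [← sum_latticeTerm_chambers, Fin.sum_univ_six]
  simp only [chamber]
  push_cast
  ring_nf

lemma hasSum_su4Term_add_reflect :
    HasSum (fun t : ℕ × ℕ × ℕ => su4Term (t.1 + 1) (t.2.1 + 1) (t.2.2 + 1)
        + su4Term (t.2.2 + 1) (t.2.1 + 1) (t.1 + 1))
      (2 * ∑' t : ℕ × ℕ × ℕ, su4Term (t.1 + 1) (t.2.1 + 1) (t.2.2 + 1)) := by
  let reflect : ℕ × ℕ × ℕ ≃ ℕ × ℕ × ℕ :=
    Function.Involutive.toPerm (fun t => (t.2.2, t.2.1, t.1)) fun _ => rfl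
  rw [two_mul]
  exact summable_su4Term.hasSum.add (reflect.hasSum_iff.mpr summable_su4Term.hasSum)

lemma tsum_latticeTerm_of_lt :
    ∑' x : ℕ × ℤ × ℤ, {x : ℕ × ℤ × ℤ | x.2.2 < x.2.1}.indicator
        (fun x => latticeTerm (x.1 + 1) x.2.1 x.2.2) x
      = 2 * ∑' t : ℕ × ℕ × ℕ, su4Term (t.1 + 1) (t.2.1 + 1) (t.2.2 + 1) := by
  have hsupp : Function.support ({x : ℕ × ℤ × ℤ | x.2.2 < x.2.1}.indicator
      fun x => latticeTerm (x.1 + 1) x.2.1 x.2.2)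
      ⊆ Set.range fun p : (ℕ × ℕ × ℕ) × Fin 6 => chamber p.2 p.1 := by
    rintro ⟨n, q, r⟩ hx
    rw [Set.support_indicator] at hx
    obtain ⟨hlt, hne⟩ := hx
    obtain ⟨i, t, h⟩ := exists_chamber_eq hlt (n := n)
      (by rintro rfl; simp [latticeTerm] at hne) (by rintro rfl; simp [latticeTerm] at hne)
      (by rintro rfl; simp [latticeTerm] at hne) (by rintro rfl; simp [latticeTerm] at hne)
    exact ⟨(t, i), h⟩
  have hfubini := (summable_latticeTerm.comp_injective chamber_injective).tsum_prod
  simp only [Function.comp_apply, tsum_fintype, sum_latticeTerm_chamber] at hfubini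
  rw [← chamber_injective.tsum_eq hsupp]
  simp only [Set.indicator_of_mem (chamber_mem _ _), hfubini]
  exact hasSum_su4Term_add_reflect.tsum_eq

lemma latticeTerm_comm (N q r : ℤ) : latticeTerm N q r = latticeTerm N r q := by
  have hqr : (q : ℂ) - r = -(r - q) := by ring
  rw [latticeTerm, latticeTerm, hqr, even_two.neg_pow, add_right_comm]
  ring

lemma tsum_latticeTerm :
    ∑' x : ℕ × ℤ × ℤ, latticeTerm (x.1 + 1) x.2.1 x.2.2
      = 4 * ∑' t : ℕ × ℕ × ℕ, su4Term (t.1 + 1) (t.2.1 + 1) (t.2.2 + 1) := by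
  let swap : ℕ × ℤ × ℤ ≃ ℕ × ℤ × ℤ := (Equiv.refl ℕ).prodCongr (Equiv.prodComm ℤ ℤ)
  set G : ℕ × ℤ × ℤ → ℂ := {x : ℕ × ℤ × ℤ | x.2.2 < x.2.1}.indicator
    fun x => latticeTerm (x.1 + 1) x.2.1 x.2.2 with hG
  have hsum : Summable G := summable_latticeTerm.indicator _
  have hsplit (x : ℕ × ℤ × ℤ) : latticeTerm (x.1 + 1) x.2.1 x.2.2 = G x + G (swap x) := by
    obtain ⟨n, q, r⟩ := x
    rcases lt_trichotomy q r with h | rfl | h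
    · simp [hG, swap, h, h.not_gt, latticeTerm_comm _ q r]
    · simp [latticeTerm, swap, hG]
    · simp [hG, swap, h, h.not_gt]
  calc _ = ∑' x, G x + ∑' x, G (swap x) := by
        simp only [hsplit]
        exact hsum.tsum_add (swap.summable_iff.mpr hsum)
    _ = 4 * _ := by
        rw [swap.tsum_eq, tsum_latticeTerm_of_lt]
        ring

end Rearrangement

section Assembly

lemma hasSum_add_mul_neg_one_zpow_div_pow {k : ℕ} (hk : 1 < k) (a b : ℂ) :
    HasSum (fun n : ℕ => (a + b * (-1) ^ (n + 1 : ℤ)) / ((n + 1 : ℤ) : ℂ) ^ k)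
      ((a + b * (2 / 2 ^ k - 1)) * riemannZeta k) := by
  have hζ := hasSum_inv_pow_riemannZeta hk
  have h := (hasSum_nat_add_iff' 1).mpr
    ((hζ.mul_left a).add ((hasSum_neg_one_pow_mul_inv_pow hζ).mul_left b))
  convert! h using 1
  · ext n
    norm_cast
    push_cast
    ring
  · rw [Finset.sum_range_one, Nat.cast_zero, zero_pow (by lia), inv_zero]
    ring

lemma tsum_latticeTerm_eq_riemannZeta :
    ∑' x : ℕ × ℤ × ℤ, latticeTerm (x.1 + 1) x.2.1 x.2.2
      = (4516 + 7248 * (2 / 2 ^ 17 - 1)) * riemannZeta (17 : ℕ)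
        + (π ^ 2 * (434 / 3) - π ^ 2 * (26 / 3) * (2 / 2 ^ 15 - 1)) * riemannZeta (15 : ℕ)
        + (π ^ 4 * (3 / 2) - π ^ 4 * (157 / 15) * (2 / 2 ^ 13 - 1)) * riemannZeta (13 : ℕ)
        - π ^ 6 * (67 / 1260) * (2 / 2 ^ 11 - 1) * riemannZeta (11 : ℕ)
        - π ^ 8 * (1 / 5040) * (2 / 2 ^ 9 - 1) * riemannZeta (9 : ℕ) := by
  have h {k : ℕ} (hk : 1 < k) (a b : ℂ) := hasSum_add_mul_neg_one_zpow_div_pow hk a b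
  have hfibre (n : ℕ) : ∑' x : ℤ × ℤ, latticeTerm (n + 1) x.1 x.2
      = ∑' (q : ℤ) (r : ℤ), latticeTerm (n + 1) q r :=
    (summable_latticeTerm.prod_factor n).tsum_prod
  rw [summable_latticeTerm.tsum_prod]
  convert! (((((h (k := 17) (by simp) 4516 7248).add
    (h (k := 15) (by simp) (π ^ 2 * (434 / 3)) (-(π ^ 2 * (26 / 3))))).add
    (h (k := 13) (by simp) (π ^ 4 * (3 / 2)) (-(π ^ 4 * (157 / 15))))).sub
    (h (k := 11) (by simp) 0 (π ^ 6 * (67 / 1260)))).sub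
    (h (k := 9) (by simp) 0 (π ^ 8 * (1 / 5040)))).tsum_eq using 1
  · refine tsum_congr fun n => ?_
    rw [hfibre, tsum_latticeTerm_fibre (by lia)]
    ring
  · ring

end Assembly

/-- `ζ₃((2,3,3,3,3,3), λ₂∨; SU(4))` evaluated in terms of Riemann zeta values
(Example 5.4 of Komori–Matsumoto–Tsumura). -/
theorem SU4_lam2_value_233333 :
    (∑' t : ℕ × ℕ × ℕ,
        (-1 : ℂ) ^ ((t.1 + 1) + (t.2.2 + 1)) /
          (((t.1 + 1 : ℕ) : ℂ) ^ 2 * ((t.2.1 + 1 : ℕ) : ℂ) ^ 3 *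
            ((t.2.2 + 1 : ℕ) : ℂ) ^ 3 * ((t.1 + 1 + (t.2.1 + 1) : ℕ) : ℂ) ^ 3 *
            ((t.2.1 + 1 + (t.2.2 + 1) : ℕ) : ℂ) ^ 3 *
            ((t.1 + 1 + (t.2.1 + 1) + (t.2.2 + 1) : ℕ) : ℂ) ^ 3)) =
      (17 * (π : ℂ) ^ 8 / 344064) * riemannZeta 9 +
        (22847 * (π : ℂ) ^ 6 / 1720320) * riemannZeta 11 +
        (49005 * (π : ℂ) ^ 4 / 16384) * riemannZeta 13 +
        (3768307 * (π : ℂ) ^ 2 / 98304) * riemannZeta 15 -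
        (11189819 / 16384) * riemannZeta 17 := by
  have h := tsum_latticeTerm.symm.trans tsum_latticeTerm_eq_riemannZeta
  simp only [su4Term, Nat.cast_ofNat] at h
  linear_combination h / 4
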